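/- arXiv:2507.00252 — 3 statements merged into one kernel-verified Lean document; each statement's English description precedes it below -/
import Mathlib

section
/- For every integer d ≥ 1 there exists a constant C_d > 0 such that for all n ≥ 2, every d-dimensional comparability graph on n vertices admits a biclique partition of size at most C_d · n · (log₂ n)^d. -/
/-!
Orient every edge from its smaller to its larger end. A linear order on points with keys below
`2 ^ L` splits into directed bicliques: if `x < y` then there is exactly one binary position `k` at
which `x` has digit `0`, `y` has digit `1` and the two agree above `k`, so the pairs `x < y` are
partitioned by `k` and the common prefix. A point with a given `k` has only one prefix, so it lies
in at most `L` sides. Intersecting one biclique per coordinate partitions the product order, and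
the numbers of sides containing a point multiply, giving at most `L ^ d` for each of the `n` points.
Ranks serve as keys, so `L = ⌈log₂ n⌉ ≤ 2 log₂ n`.
-/

/-- A biclique cover of a simple graph `G`: a finite family of pairs of disjoint
vertex sets `(A i, B i)` such that every pair in `A i × B i` is an edge of `G`,
and every edge of `G` is covered by at least one biclique. -/
def IsBicliqueCover {V : Type*} (G : SimpleGraph V) {m : ℕ}
    (A B : Fin m → Finset V) : Prop :=
  (∀ i, Disjoint (A i) (B i)) ∧
  (∀ i, ∀ a ∈ A i, ∀ b ∈ B i, G.Adj a b) ∧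
  (∀ u v, G.Adj u v → ∃ i, (u ∈ A i ∧ v ∈ B i) ∨ (v ∈ A i ∧ u ∈ B i))

/-- A biclique partition: a biclique cover in which every edge is covered by
exactly one biclique. -/
def IsBicliquePartition {V : Type*} (G : SimpleGraph V) {m : ℕ}
    (A B : Fin m → Finset V) : Prop :=
  (∀ i, Disjoint (A i) (B i)) ∧
  (∀ i, ∀ a ∈ A i, ∀ b ∈ B i, G.Adj a b) ∧
  (∀ u v, G.Adj u v → ∃! i, (u ∈ A i ∧ v ∈ B i) ∨ (v ∈ A i ∧ u ∈ B i))

/-- The size of a biclique cover: the sum of `|A i| + |B i|`. -/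
def coverSize {V : Type*} {m : ℕ} (A B : Fin m → Finset V) : ℕ :=
  ∑ i, ((A i).card + (B i).card)

open Finset

section SplitBit

variable {x y k l : ℕ}

/-- `k` is the leading binary position at which `x < y` differ. Agreement above `k` is phrased
through the prefixes `x / 2 ^ (k + 1)`, since the common prefix indexes a biclique later. -/
structure IsSplitBit (x y k : ℕ) : Prop where
  testBit_left : x.testBit k = false
  testBit_right : y.testBit k = true
  prefix_eq : x / 2 ^ (k + 1) = y / 2 ^ (k + 1)

lemma IsSplitBit.testBit_eq_of_lt (h : IsSplitBit x y k) (hkl : k < l) :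
    x.testBit l = y.testBit l := by
  obtain ⟨m, rfl⟩ : ∃ m, l = m + (k + 1) := Nat.exists_eq_add_of_le' hkl
  rw [← Nat.testBit_div_two_pow, ← Nat.testBit_div_two_pow, h.prefix_eq]

lemma IsSplitBit.lt (h : IsSplitBit x y k) : x < y :=
  Nat.lt_of_testBit k h.testBit_left h.testBit_right fun _ => h.testBit_eq_of_lt

lemma IsSplitBit.le (h : IsSplitBit x y k) (h' : IsSplitBit x y l) : l ≤ k := by
  by_contra! hkl
  simpa [h'.testBit_left, h'.testBit_right] using h.testBit_eq_of_lt hkl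

lemma exists_isSplitBit (hxy : x < y) : ∃ k, IsSplitBit x y k := by
  induction y using Nat.strong_induction_on generalizing x with
  | _ y ih =>
    rcases (Nat.div_le_div_right hxy.le : x / 2 ≤ y / 2).eq_or_lt with heq | hlt
    · refine ⟨0, ?_, ?_, by simpa using heq⟩ <;>
        simp only [Nat.testBit_zero, decide_eq_true_eq, decide_eq_false_iff_not] <;> omega
    · obtain ⟨k, hx, hy, hpre⟩ := ih (y / 2) (by omega) hlt
      exact ⟨k + 1, by rwa [Nat.testBit_succ], by rwa [Nat.testBit_succ],
        by simpa only [Nat.div_div_eq_div_mul, ← pow_succ'] using hpre⟩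

lemma existsUnique_isSplitBit (hxy : x < y) : ∃! k, IsSplitBit x y k :=
  let ⟨k, hk⟩ := exists_isSplitBit hxy
  ⟨k, hk, fun _ hl => le_antisymm (hk.le hl) (hl.le hk)⟩

end SplitBit

section DirectedBicliquePartition

variable {V κ : Type*}

/-- The directed analogue of `IsBicliquePartition`: the products `A i × B i` partition the pairs
related by `r`. The index type is arbitrary so that products of partitions can be formed. -/
structure IsDirectedBicliquePartition (r : V → V → Prop) (A B : κ → Finset V) : Prop where
  rel : ∀ i, ∀ a ∈ A i, ∀ b ∈ B i, r a b
  existsUnique : ∀ u v, r u v → ∃! i, u ∈ A i ∧ v ∈ B i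

lemma IsDirectedBicliquePartition.isBicliquePartition {r : V → V → Prop} {m : ℕ}
    {A B : Fin m → Finset V} (h : IsDirectedBicliquePartition r A B)
    (hr : ∀ u v, r u v → ¬ r v u) {G : SimpleGraph V} (hG : ∀ u v, G.Adj u v ↔ r u v ∨ r v u) :
    IsBicliquePartition G A B := by
  have covered_once (u v : V) (huv : r u v) :
      ∃! i, (u ∈ A i ∧ v ∈ B i) ∨ (v ∈ A i ∧ u ∈ B i) := by
    have not_reversed (i) : ¬ (v ∈ A i ∧ u ∈ B i) := fun hi =>
      hr u v huv (h.rel i v hi.1 u hi.2)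
    simpa only [not_reversed, or_false] using h.existsUnique u v huv
  refine ⟨fun i => disjoint_left.mpr fun v hA hB => ?_,
    fun i a ha b hb => (hG a b).mpr (Or.inl (h.rel i a ha b hb)), fun u v huv => ?_⟩
  · exact hr v v (h.rel i v hA v hB) (h.rel i v hA v hB)
  · rcases (hG u v).mp huv with huv | hvu
    · exact covered_once u v huv
    · simpa only [or_comm] using covered_once v u hvu

lemma IsDirectedBicliquePartition.comp_equiv {κ' : Type*} {r : V → V → Prop} {A B : κ → Finset V}
    (h : IsDirectedBicliquePartition r A B) (e : κ' ≃ κ) :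
    IsDirectedBicliquePartition r (A ∘ e) (B ∘ e) where
  rel i := h.rel (e i)
  existsUnique u v huv := (e.existsUnique_congr_left.trans (by simp)).mpr (h.existsUnique u v huv)

/-- The number of members of the family `A` that contain `v`. -/
def load [Fintype κ] [DecidableEq V] (A : κ → Finset V) (v : V) : ℕ :=
  #{i | v ∈ A i}

lemma sum_card_eq_sum_load [Fintype κ] [Fintype V] [DecidableEq V] (A : κ → Finset V) :
    ∑ i, #(A i) = ∑ v, load A v := by
  simpa [bipartiteAbove, bipartiteBelow, load] using
    sum_card_bipartiteAbove_eq_sum_card_bipartiteBelow (s := univ) (t := univ) fun i v => v ∈ A i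

theorem IsDirectedBicliquePartition.exists_isBicliquePartition [Fintype κ] [Fintype V]
    [DecidableEq V] {r : V → V → Prop} {A B : κ → Finset V} {c : ℕ}
    (h : IsDirectedBicliquePartition r A B) (hc : ∀ v, load A v + load B v ≤ c)
    (hr : ∀ u v, r u v → ¬ r v u) {G : SimpleGraph V} (hG : ∀ u v, G.Adj u v ↔ r u v ∨ r v u) :
    ∃ (m : ℕ) (A' B' : Fin m → Finset V),
      IsBicliquePartition G A' B' ∧ coverSize A' B' ≤ Fintype.card V * c := by
  let e := (Fintype.equivFin κ).symm
  refine ⟨_, A ∘ e, B ∘ e, (h.comp_equiv e).isBicliquePartition hr hG, ?_⟩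
  calc coverSize (A ∘ e) (B ∘ e) = ∑ i, (#(A i) + #(B i)) :=
        e.sum_comp fun i => #(A i) + #(B i)
    _ = ∑ v, (load A v + load B v) := by
        simp only [sum_add_distrib, sum_card_eq_sum_load]
    _ ≤ Fintype.card V * c := sum_le_card_nsmul univ _ c fun v _ => hc v

end DirectedBicliquePartition

section Pi

variable {V ι : Type*} [Fintype V] [DecidableEq V] [Fintype ι] {κ : ι → Type*}

/-- The family of all intersections of one member from each of the families `A j`. -/
def piInter (A : ∀ j, κ j → Finset V) (p : ∀ j, κ j) : Finset V :=
  {v | ∀ j, v ∈ A j (p j)}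

@[simp]
lemma mem_piInter {A : ∀ j, κ j → Finset V} {p : ∀ j, κ j} {v : V} :
    v ∈ piInter A p ↔ ∀ j, v ∈ A j (p j) := by
  simp [piInter]

lemma IsDirectedBicliquePartition.pi {r : ι → V → V → Prop} {A B : ∀ j, κ j → Finset V}
    (h : ∀ j, IsDirectedBicliquePartition (r j) (A j) (B j)) :
    IsDirectedBicliquePartition (fun u v => ∀ j, r j u v) (piInter A) (piInter B) where
  rel p a ha b hb j := (h j).rel (p j) a (mem_piInter.mp ha j) b (mem_piInter.mp hb j)
  existsUnique u v huv := by
    choose p hp hp_unique using fun j => (h j).existsUnique u v (huv j)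
    simp only [mem_piInter, ← forall_and]
    exact ⟨p, hp, fun q hq => funext fun j => hp_unique j (q j) (hq j)⟩

lemma load_piInter [DecidableEq ι] [∀ j, Fintype (κ j)] (A : ∀ j, κ j → Finset V) (v : V) :
    load (piInter A) v = ∏ j, load (A j) v := by
  simp only [load, ← Fintype.card_piFinset]
  congr 1
  ext p
  simp

lemma load_piInter_add_le [DecidableEq ι] [Nonempty ι] [∀ j, Fintype (κ j)]
    {A B : ∀ j, κ j → Finset V} {c : ι → ℕ} {v : V}
    (h : ∀ j, load (A j) v + load (B j) v ≤ c j) :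
    load (piInter A) v + load (piInter B) v ≤ ∏ j, c j := by
  rw [load_piInter, load_piInter]
  exact prod_add_prod_le' (mem_univ (Classical.arbitrary ι)) (h _)
    (fun j _ _ => le_of_add_le_left (h j)) (fun j _ _ => le_of_add_le_right (h j))

end Pi

section LinearOrder

variable {V : Type*} [Fintype V]

/-- The points whose key `f v` has binary digit `b` at position `i.1` and prefix `i.2` above that
position: for `b = false, true` these are the two sides of the biclique with index `i`. -/
def digitBlock (f : V → ℕ) (L : ℕ) (b : Bool) (i : Fin L × Fin (2 ^ L)) : Finset V :=
  {v | (f v).testBit i.1 = b ∧ f v / 2 ^ (i.1 + 1 : ℕ) = i.2}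

@[simp]
lemma mem_digitBlock {f : V → ℕ} {L : ℕ} {b : Bool} {i : Fin L × Fin (2 ^ L)} {v : V} :
    v ∈ digitBlock f L b i ↔ (f v).testBit i.1 = b ∧ f v / 2 ^ (i.1 + 1 : ℕ) = i.2 := by
  simp [digitBlock]

lemma isDirectedBicliquePartition_digitBlock {f : V → ℕ} {L : ℕ} (hf : ∀ v, f v < 2 ^ L) :
    IsDirectedBicliquePartition (fun u v => f u < f v)
      (digitBlock f L false) (digitBlock f L true) := by
  have isSplitBit {u v : V} {i} (hu : u ∈ digitBlock f L false i)
      (hv : v ∈ digitBlock f L true i) : IsSplitBit (f u) (f v) i.1 := by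
    rw [mem_digitBlock] at hu hv
    exact ⟨hu.1, hv.1, hu.2.trans hv.2.symm⟩
  refine ⟨fun i u hu v hv => (isSplitBit hu hv).lt, fun u v huv => ?_⟩
  obtain ⟨k, hk, hk_unique⟩ := existsUnique_isSplitBit huv
  have hkL : k < L := by
    by_contra! hLk
    have := Nat.testBit_lt_two_pow ((hf v).trans_le (Nat.pow_le_pow_right two_pos hLk))
    simp [hk.testBit_right] at this
  refine ⟨(⟨k, hkL⟩, ⟨f u / 2 ^ (k + 1), (Nat.div_le_self _ _).trans_lt (hf u)⟩), ?_, ?_⟩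
  · simp [hk.testBit_left, hk.testBit_right, hk.prefix_eq]
  · rintro ⟨l, p⟩ ⟨hu, hv⟩
    obtain rfl : (l : ℕ) = k := hk_unique l (isSplitBit hu hv)
    exact Prod.ext rfl (Fin.ext (mem_digitBlock.mp hu).2.symm)

lemma load_digitBlock_le [DecidableEq V] (f : V → ℕ) (L : ℕ) (b : Bool) (v : V) :
    load (digitBlock f L b) v ≤ #{k : Fin L | (f v).testBit k = b} := by
  refine card_le_card_of_injOn Prod.fst (fun i hi => ?_) fun i hi l hl hil => ?_
  · simp_all
  · simp only [coe_filter, mem_univ, true_and, Set.mem_ofPred_eq, mem_digitBlock] at hi hl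
    exact Prod.ext hil (Fin.ext (by rw [← hi.2, ← hl.2, hil]))

lemma load_digitBlock_add_le [DecidableEq V] (f : V → ℕ) (L : ℕ) (v : V) :
    load (digitBlock f L false) v + load (digitBlock f L true) v ≤ L := by
  calc load (digitBlock f L false) v + load (digitBlock f L true) v
      ≤ #{k : Fin L | (f v).testBit k = false} + #{k : Fin L | (f v).testBit k = true} :=
        add_le_add (load_digitBlock_le f L false v) (load_digitBlock_le f L true v)
    _ = L := by
        simpa [add_comm] using
          card_filter_add_card_filter_not (s := univ) fun k : Fin L => (f v).testBit k = true

lemma exists_rank {α : Type*} [LinearOrder α] (f : V → α) :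
    ∃ r : V → ℕ, (∀ v, r v < Fintype.card V) ∧ ∀ u v, r u < r v ↔ f u < f v := by
  let e := (univ.image f).orderIsoOfFin rfl
  refine ⟨fun v => e.symm ⟨f v, mem_image_of_mem f (mem_univ v)⟩,
    fun v => (Fin.is_lt _).trans_le card_image_le, fun u v => ?_⟩
  rw [Fin.val_fin_lt, e.symm.lt_iff_lt, Subtype.mk_lt_mk]

end LinearOrder

lemma clog_two_le_two_mul_logb (n : ℕ) : (Nat.clog 2 n : ℝ) ≤ 2 * Real.logb 2 n := by
  rcases lt_or_ge n 2 with hn | hn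
  · interval_cases n <;> simp
  · have one_le_logb : 1 ≤ Real.logb 2 n := by
      rw [Real.le_logb_iff_rpow_le one_lt_two (by positivity), Real.rpow_one]
      exact_mod_cast hn
    rw [← Real.natCeil_logb_natCast]
    exact Nat.ceil_le_two_mul (by push_cast; linarith)

section ProductOrder

variable {V ι : Type*} [Fintype V] [Fintype ι] [Nonempty ι] {α : ι → Type*}
  [∀ j, LinearOrder (α j)] {G : SimpleGraph V} {φ : V → ∀ j, α j}

theorem exists_isBicliquePartition_coverSize_le_clog
    (hG : ∀ u v, G.Adj u v ↔ (∀ j, φ u j < φ v j) ∨ (∀ j, φ v j < φ u j)) :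
    ∃ (m : ℕ) (A B : Fin m → Finset V), IsBicliquePartition G A B ∧
      coverSize A B ≤ Fintype.card V * Nat.clog 2 (Fintype.card V) ^ Fintype.card ι := by
  classical
  let L := Nat.clog 2 (Fintype.card V)
  choose rank rank_lt rank_lt_iff using fun j => exists_rank fun v => φ v j
  have rank_lt_two_pow (j v) : rank j v < 2 ^ L :=
    (rank_lt j v).trans_le (Nat.le_pow_clog one_lt_two _)
  have partition := IsDirectedBicliquePartition.pi fun j =>
    isDirectedBicliquePartition_digitBlock (rank_lt_two_pow j)
  simp only [rank_lt_iff] at partition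
  have load_le (v : V) := load_piInter_add_le fun j => load_digitBlock_add_le (rank j) L v
  simp only [prod_const, card_univ] at load_le
  have asymm (u v : V) (huv : ∀ j, φ u j < φ v j) : ¬ ∀ j, φ v j < φ u j := fun hvu =>
    (huv (Classical.arbitrary ι)).not_gt (hvu _)
  exact partition.exists_isBicliquePartition load_le asymm hG

theorem stmt_5_general
    (hG : ∀ u v, G.Adj u v ↔ (∀ j, φ u j < φ v j) ∨ (∀ j, φ v j < φ u j)) :
    ∃ (m : ℕ) (A B : Fin m → Finset V), IsBicliquePartition G A B ∧
      (coverSize A B : ℝ) ≤ 2 ^ Fintype.card ι * (Fintype.card V : ℝ) *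
        Real.logb 2 (Fintype.card V) ^ Fintype.card ι := by
  obtain ⟨m, A, B, hAB, hsize⟩ := exists_isBicliquePartition_coverSize_le_clog hG
  refine ⟨m, A, B, hAB, ?_⟩
  calc (coverSize A B : ℝ)
      ≤ Fintype.card V * (Nat.clog 2 (Fintype.card V) : ℝ) ^ Fintype.card ι := by
        exact_mod_cast hsize
    _ ≤ Fintype.card V * (2 * Real.logb 2 (Fintype.card V)) ^ Fintype.card ι := by
        gcongr
        exact clog_two_le_two_mul_logb _
    _ = 2 ^ Fintype.card ι * (Fintype.card V : ℝ) *
        Real.logb 2 (Fintype.card V) ^ Fintype.card ι := by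
        ring

end ProductOrder

/-- Every `d`-dimensional comparability graph on `n` vertices admits a
biclique partition of size `O(n (log₂ n)^d)`. -/
theorem stmt_5 (d : ℕ) (hd : 1 ≤ d) :
    ∃ C : ℝ, 0 < C ∧ ∀ n : ℕ, 2 ≤ n → ∀ (V : Type) [Fintype V],
      Fintype.card V = n →
      ∀ (G : SimpleGraph V) (φ : V → Fin d → ℝ),
      (∀ u v : V, u ≠ v → ∀ j, φ u j ≠ φ v j) →
      (∀ u v : V, G.Adj u v ↔ ((∀ j, φ u j < φ v j) ∨ (∀ j, φ v j < φ u j))) →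
      ∃ (m : ℕ) (A B : Fin m → Finset V),
        IsBicliquePartition G A B ∧
        (coverSize A B : ℝ) ≤ C * (n : ℝ) * (Real.logb 2 n) ^ d := by
  have : Nonempty (Fin d) := Fin.pos_iff_nonempty.mp hd
  refine ⟨2 ^ d, by positivity, fun n _ V _ hV G φ _ hG => ?_⟩
  simpa only [Fintype.card_fin, hV] using stmt_5_general hG
end

section
/- There exists a constant C > 0 such that for all n ≥ 2, the intersection graph of any family of n grounded L-shapes in the plane admits a biclique cover of size at most C · n · (log₂ n)³. -/
/-- The L-shape with corner `(a, b)`, height `h` and width `w`. -/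
def LShape (a b h w : ℝ) : Set (ℝ × ℝ) :=
  ({a} ×ˢ Set.Icc b (b + h)) ∪ (Set.Icc a (a + w) ×ˢ {b})

/-!
Two L-shapes, the first with its corner weakly up and to the left of the second, meet iff the
horizontal leg of the first crosses the vertical leg of the second. When the corners are distinct
and the ordinates vary oppositely to the abscissas, `a - b` orders them from left to right, so
adjacency is, up to swapping the two shapes, the conjunction of three comparisons between a number
attached to one shape and a number attached to the other.

Replacing reals by ranks turns each comparison into `x u < y v` for natural numbers with about
`log₂ n` bits. Such an inequality is witnessed at the highest bit where the two numbers differ: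
fixing this bit and the common prefix above it gives a rectangle, and a number lies in one rectangle
per bit on each side. Intersecting the rectangles of the three comparisons multiplies these
multiplicities, so each vertex is counted `O((log₂ n)³)` times.
-/

section RectangleCover

variable {V W : Type*} {r s : V → W → Prop} {k l : ℕ}

/-- The relation `r` is a union of finitely many rectangles `A i ×ˢ B i` such that every point lies
in at most `k` of the left sides and in at most `k` of the right sides. When the symmetrization of
`r` is the adjacency of a graph, the rectangles form a biclique cover; bounding its size vertex by
vertex makes the bounds multiply under intersection of relations. -/
def HasRectangleCover (r : V → W → Prop) (k : ℕ) : Prop :=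
  ∃ (m : ℕ) (A : Fin m → Set V) (B : Fin m → Set W),
    (∀ u v, r u v ↔ ∃ i, u ∈ A i ∧ v ∈ B i) ∧
    (∀ u, {i | u ∈ A i}.ncard ≤ k) ∧ (∀ v, {i | v ∈ B i}.ncard ≤ k)

namespace HasRectangleCover

lemma of_finite {ι : Type*} [Finite ι] (A : ι → Set V) (B : ι → Set W)
    (hr : ∀ u v, r u v ↔ ∃ i, u ∈ A i ∧ v ∈ B i) (hA : ∀ u, {i | u ∈ A i}.ncard ≤ k)
    (hB : ∀ v, {i | v ∈ B i}.ncard ≤ k) : HasRectangleCover r k := by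
  let e := (Finite.equivFin ι).symm
  have ncard_preimage (S : Set ι) : (e ⁻¹' S).ncard = S.ncard :=
    Set.ncard_preimage_of_injective_subset_range e.injective (by simp)
  exact ⟨Nat.card ι, A ∘ e, B ∘ e, fun u v => (hr u v).trans e.surjective.exists,
    fun u => (ncard_preimage _).trans_le (hA u), fun v => (ncard_preimage _).trans_le (hB v)⟩

lemma setProd (S : Set V) (T : Set W) : HasRectangleCover (fun u v => u ∈ S ∧ v ∈ T) 1 :=
  of_finite (fun _ : Unit => S) (fun _ => T) (by simp)
    (fun _ => Set.ncard_le_one_of_subsingleton _) (fun _ => Set.ncard_le_one_of_subsingleton _)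

lemma of_apply_eq [Finite V] {α : Type*} (f : V → α) (g : W → α) :
    HasRectangleCover (fun u v => f u = g v) 1 := by
  refine of_finite (fun c : Set.range f => {u | f u = c}) (fun c => {v | g v = c}) ?_ ?_ ?_
  · exact fun u v => ⟨fun h => ⟨⟨f u, u, rfl⟩, rfl, h.symm⟩, fun ⟨_, hu, hv⟩ => hu.trans hv.symm⟩
  all_goals
    refine fun _ => Set.ncard_le_one_iff_subsingleton.2 fun _ hc _ hc' => ?_
    exact Subtype.ext (hc.symm.trans hc')

protected lemma and (hr : HasRectangleCover r k) (hs : HasRectangleCover s l) :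
    HasRectangleCover (fun u v => r u v ∧ s u v) (k * l) := by
  obtain ⟨m, A, B, hr, hA, hB⟩ := hr
  obtain ⟨m', A', B', hs, hA', hB'⟩ := hs
  refine of_finite (fun i : Fin m × Fin m' => A i.1 ∩ A' i.2) (fun i => B i.1 ∩ B' i.2) ?_ ?_ ?_
  · intro u v
    simp only [hr, hs, Prod.exists, Set.mem_inter_iff]
    grind
  · exact fun u => Set.ncard_prod.trans_le (Nat.mul_le_mul (hA u) (hA' u))
  · exact fun v => Set.ncard_prod.trans_le (Nat.mul_le_mul (hB v) (hB' v))

protected lemma or (hr : HasRectangleCover r k) (hs : HasRectangleCover s l) :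
    HasRectangleCover (fun u v => r u v ∨ s u v) (k + l) := by
  obtain ⟨m, A, B, hr, hA, hB⟩ := hr
  obtain ⟨m', A', B', hs, hA', hB'⟩ := hs
  have ncard_le (S : Set (Fin m ⊕ Fin m')) (hl : (Sum.inl ⁻¹' S).ncard ≤ k)
      (hr : (Sum.inr ⁻¹' S).ncard ≤ l) : S.ncard ≤ k + l := by
    rw [← Set.image_preimage_inl_union_image_preimage_inr S]
    refine (Set.ncard_union_le _ _).trans (Nat.add_le_add ?_ ?_)
    · rwa [Set.ncard_image_of_injective _ Sum.inl_injective]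
    · rwa [Set.ncard_image_of_injective _ Sum.inr_injective]
  exact of_finite (Sum.elim A A') (Sum.elim B B') (by simp [hr, hs])
    (fun u => ncard_le _ (hA u) (hA' u)) (fun v => ncard_le _ (hB v) (hB' v))

lemma lt_of_lt_two_pow [Finite V] (x : V → ℕ) (y : W → ℕ) (hy : ∀ v, y v < 2 ^ k) :
    HasRectangleCover (fun u v => x u < y v) k := by
  induction k generalizing x y with
  | zero =>
    have hxy (u : V) (v : W) : ¬ x u < y v := by grind
    exact of_finite (fun _ : Empty => ∅) (fun _ => ∅) (by simp [hxy]) (by simp) (by simp)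
  | succ k ih =>
    have lt_iff (u : V) (v : W) : x u < y v ↔
        x u / 2 < y v / 2 ∨ x u / 2 = y v / 2 ∧ x u % 2 = 0 ∧ y v % 2 = 1 := by
      omega
    simp only [lt_iff]
    refine (ih (x · / 2) (y · / 2) fun v => ?_).or
      ((of_apply_eq (x · / 2) (y · / 2)).and (setProd {u | x u % 2 = 0} {v | y v % 2 = 1}))
    grind

end HasRectangleCover

end RectangleCover

section Ferrers

variable {V W α : Type*} [LinearOrder α] {r : V → W → Prop}

/-- A Ferrers relation: one whose rows, equivalently whose columns, are totally ordered by
inclusion. It treats strict and weak comparisons of `f u` with `g v` in a linear order alike. -/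
def IsFerrers (r : V → W → Prop) : Prop :=
  ∀ ⦃u v u' v'⦄, r u v → r u' v' → r u v' ∨ r u' v

lemma isFerrers_le (f : V → α) (g : W → α) : IsFerrers fun u v => f u ≤ g v := by
  grind [IsFerrers]

lemma isFerrers_ge (f : V → α) (g : W → α) : IsFerrers fun u v => g v ≤ f u :=
  isFerrers_le (α := αᵒᵈ) f g

lemma isFerrers_lt (f : V → α) (g : W → α) : IsFerrers fun u v => f u < g v := by
  grind [IsFerrers]

lemma IsFerrers.exists_rank [Finite V] (hr : IsFerrers r) :
    ∃ (x : V → ℕ) (y : W → ℕ), (∀ v, y v ≤ Nat.card V) ∧ ∀ u v, r u v ↔ x u < y v := by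
  let column (v : W) : Set V := {u | r u v}
  let above (u : V) : Set V := {u' | ∃ v, r u' v ∧ ¬ r u v}
  refine ⟨fun u => (above u).ncard, fun v => (column v).ncard, fun v => Set.ncard_le_card _,
    fun u v => ⟨fun huv => ?_, fun hlt => ?_⟩⟩
  · have subset : above u ⊆ column v := fun u' ⟨v', hu'v', huv'⟩ =>
      (hr huv hu'v').resolve_left huv'
    have notMem : u ∉ above u := fun ⟨_, h, h'⟩ => h' h
    exact Set.ncard_lt_ncard ((Set.ssubset_iff_of_subset subset).2 ⟨u, huv, notMem⟩)
  · by_contra huv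
    exact hlt.not_ge (Set.ncard_le_ncard fun u' hu'v => ⟨v, hu'v, huv⟩)

lemma IsFerrers.hasRectangleCover [Finite V] (hr : IsFerrers r) :
    HasRectangleCover r (Nat.log 2 (Nat.card V) + 1) := by
  obtain ⟨x, y, hy, hxy⟩ := hr.exists_rank
  obtain rfl : r = fun u v => x u < y v := by
    ext u v
    exact hxy u v
  exact .lt_of_lt_two_pow x y fun v => (hy v).trans_lt (Nat.lt_pow_succ_log_self one_lt_two _)

end Ferrers

section BicliqueCover

variable {V : Type*} [Fintype V] {k : ℕ}

lemma sum_card_le_of_ncard_le {ι : Type*} [Fintype ι] (A : ι → Finset V)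
    (hA : ∀ u, {i | u ∈ A i}.ncard ≤ k) : ∑ i, (A i).card ≤ Fintype.card V * k := by
  classical
  calc ∑ i, (A i).card = ∑ i, (Finset.univ.bipartiteAbove (fun i u => u ∈ A i) i).card := by
        simp [Finset.bipartiteAbove]
    _ = ∑ u, (Finset.univ.bipartiteBelow (fun i u => u ∈ A i) u).card :=
        Finset.sum_card_bipartiteAbove_eq_sum_card_bipartiteBelow _
    _ = ∑ u, {i | u ∈ A i}.ncard := by
        simp [Finset.bipartiteBelow, Set.ncard_eq_toFinset_card']
    _ ≤ Fintype.card V * k := Finset.sum_le_card_nsmul _ _ k fun u _ => hA u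

theorem HasRectangleCover.exists_isBicliqueCover {G : SimpleGraph V} {r : V → V → Prop}
    (hr : HasRectangleCover r k) (hG : ∀ u v, G.Adj u v ↔ r u v ∨ r v u) :
    ∃ (m : ℕ) (A B : Fin m → Finset V),
      IsBicliqueCover G A B ∧ coverSize A B ≤ 2 * Fintype.card V * k := by
  classical
  obtain ⟨m, A, B, hr, hA, hB⟩ := hr
  have hadj (i : Fin m) {u v : V} (hu : u ∈ A i) (hv : v ∈ B i) : G.Adj u v :=
    (hG u v).2 (.inl ((hr u v).2 ⟨i, hu, hv⟩))
  refine ⟨m, fun i => (A i).toFinset, fun i => (B i).toFinset, ⟨fun i => ?_, ?_, ?_⟩, ?_⟩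
  · rw [Set.disjoint_toFinset, Set.disjoint_left]
    exact fun u hu hu' => (hadj i hu hu').ne rfl
  · simpa using fun i u hu v hv => hadj i hu hv
  · intro u v huv
    simpa only [Set.mem_toFinset, exists_or, ← hr] using (hG u v).1 huv
  · have hA' := sum_card_le_of_ncard_le (fun i => (A i).toFinset) (by simpa using hA)
    have hB' := sum_card_le_of_ncard_le (fun i => (B i).toFinset) (by simpa using hB)
    rw [coverSize, Finset.sum_add_distrib]
    linarith

end BicliqueCover

section Antivary

variable {V α : Type*} [AddCommGroup α] [LinearOrder α] [IsOrderedAddMonoid α] {a b : V → α}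
  {u v : V}

lemma sub_lt_sub_of_antivary_of_lt (hab : Antivary b a) (huv : a u < a v) :
    a u - b u < a v - b v :=
  (sub_lt_sub_right huv _).trans_le (sub_le_sub_left (hab huv) _)

lemma le_and_le_of_antivary_of_sub_lt_sub (hab : Antivary b a) (huv : a u - b u < a v - b v) :
    a u ≤ a v ∧ b v ≤ b u := by
  have ha : a u ≤ a v := not_lt.1 fun hlt => huv.not_gt (sub_lt_sub_of_antivary_of_lt hab hlt)
  refine ⟨ha, not_lt.1 fun hlt => huv.not_ge ?_⟩
  exact sub_le_sub (hab.symm hlt) hlt.le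

lemma eq_and_eq_of_antivary_of_sub_eq_sub (hab : Antivary b a) (huv : a u - b u = a v - b v) :
    a u = a v ∧ b u = b v := by
  have ha : a u = a v := le_antisymm
    (not_lt.1 fun hlt => (sub_lt_sub_of_antivary_of_lt hab hlt).ne' huv)
    (not_lt.1 fun hlt => (sub_lt_sub_of_antivary_of_lt hab hlt).ne huv)
  exact ⟨ha, by simpa [ha] using huv⟩

end Antivary

lemma antivary_of_eq_mul_add {V R : Type*} [Ring R] [PartialOrder R] [IsOrderedRing R]
    {a b : V → R} {α β : R} (hα : α ≤ 0) (hb : ∀ v, b v = α * a v + β) : Antivary b a := by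
  intro u v huv
  rw [hb, hb]
  exact add_le_add_left (mul_le_mul_of_nonpos_left huv.le hα) β

namespace LShape

lemma inter_nonempty_iff {a b h w a' b' h' w' : ℝ} (hw : 0 ≤ w) (hh' : 0 ≤ h')
    (ha : a ≤ a') (hb : b' ≤ b) :
    (LShape a b h w ∩ LShape a' b' h' w').Nonempty ↔ a' ≤ a + w ∧ b ≤ b' + h' := by
  constructor
  · rintro ⟨⟨p, q⟩, hp, hq⟩
    simp only [LShape, Set.mem_union, Set.mem_prod, Set.mem_singleton_iff, Set.mem_Icc] at hp hq
    grind
  · rintro ⟨ha', hb'⟩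
    exact ⟨(a', b), Or.inr ⟨⟨ha, ha'⟩, rfl⟩, Or.inl ⟨rfl, hb, hb'⟩⟩

variable {V : Type*} {a b h w : V → ℝ}

/-- The shape `u` precedes `v` and its horizontal leg crosses the vertical leg of `v`, provided
that the ordinates `b` of the corners vary oppositely to the abscissas `a`. The order is that of
`a - b`, which also separates corners sharing only one coordinate. -/
def Crosses (a b h w : V → ℝ) (u v : V) : Prop :=
  a u - b u < a v - b v ∧ a v ≤ a u + w u ∧ b u ≤ b v + h v

lemma hasRectangleCover_crosses [Finite V] (a b h w : V → ℝ) :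
    HasRectangleCover (Crosses a b h w) ((Nat.log 2 (Nat.card V) + 1) ^ 3) := by
  have hcover :=
    (isFerrers_lt (fun u => a u - b u) (fun v => a v - b v)).hasRectangleCover.and <|
      (isFerrers_ge (fun u => a u + w u) a).hasRectangleCover.and
        (isFerrers_le b (fun v => b v + h v)).hasRectangleCover
  rwa [← pow_two, ← pow_succ'] at hcover

lemma inter_nonempty_iff_crosses (hh : ∀ v, 0 ≤ h v) (hw : ∀ v, 0 ≤ w v)
    (hab : Antivary b a) {u v : V} (huv : a u - b u < a v - b v) :
    (LShape (a u) (b u) (h u) (w u) ∩ LShape (a v) (b v) (h v) (w v)).Nonempty ↔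
      Crosses a b h w u v := by
  obtain ⟨ha, hb⟩ := le_and_le_of_antivary_of_sub_lt_sub hab huv
  rw [inter_nonempty_iff (hw u) (hh v) ha hb, Crosses, and_iff_right huv]

lemma ne_and_inter_nonempty_iff_crosses (hh : ∀ v, 0 ≤ h v) (hw : ∀ v, 0 ≤ w v)
    (hab : Antivary b a) (hinj : Function.Injective fun v => (a v, b v)) (u v : V) :
    (u ≠ v ∧ (LShape (a u) (b u) (h u) (w u) ∩ LShape (a v) (b v) (h v) (w v)).Nonempty) ↔
      Crosses a b h w u v ∨ Crosses a b h w v u := by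
  rcases lt_trichotomy (a u - b u) (a v - b v) with hlt | heq | hlt
  · have hne : u ≠ v := by rintro rfl; exact hlt.false
    simp [inter_nonempty_iff_crosses hh hw hab hlt, Crosses, hne, hlt.not_gt]
  · obtain ⟨ha, hb⟩ := eq_and_eq_of_antivary_of_sub_eq_sub hab heq
    have huv : u = v := hinj (Prod.ext ha hb)
    simp [huv, Crosses]
  · have hne : u ≠ v := by rintro rfl; exact hlt.false
    rw [Set.inter_comm]
    simp [inter_nonempty_iff_crosses hh hw hab hlt, Crosses, hne, hlt.not_gt]

end LShape

lemma natLog_add_one_le_two_mul_logb {n : ℕ} (hn : 2 ≤ n) :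
    (Nat.log 2 n + 1 : ℝ) ≤ 2 * Real.logb 2 n := by
  have hlog : (Nat.log 2 n : ℝ) ≤ Real.logb 2 n := mod_cast Real.natLog_le_logb n 2
  have one_le : (1 : ℝ) ≤ Nat.log 2 n := mod_cast Nat.log_pos one_lt_two hn
  linarith

theorem stmt_10_general {V : Type*} [Fintype V] (hV : 2 ≤ Fintype.card V) (a b h w : V → ℝ)
    (hh : ∀ v, 0 ≤ h v) (hw : ∀ v, 0 ≤ w v) (hab : Antivary b a)
    (hinj : Function.Injective fun v => (a v, b v)) (G : SimpleGraph V)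
    (hG : ∀ u v, G.Adj u v ↔ u ≠ v ∧
      (LShape (a u) (b u) (h u) (w u) ∩ LShape (a v) (b v) (h v) (w v)).Nonempty) :
    ∃ (m : ℕ) (A B : Fin m → Finset V), IsBicliqueCover G A B ∧
      (coverSize A B : ℝ) ≤ 16 * Fintype.card V * Real.logb 2 (Fintype.card V) ^ 3 := by
  have hadj (u v : V) :=
    (hG u v).trans (LShape.ne_and_inter_nonempty_iff_crosses hh hw hab hinj u v)
  obtain ⟨m, A, B, hcover, hsize⟩ :=
    (LShape.hasRectangleCover_crosses a b h w).exists_isBicliqueCover hadj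
  rw [Nat.card_eq_fintype_card] at hsize
  refine ⟨m, A, B, hcover, ?_⟩
  calc (coverSize A B : ℝ)
      ≤ 2 * Fintype.card V * (Nat.log 2 (Fintype.card V) + 1) ^ 3 := mod_cast hsize
    _ ≤ 2 * Fintype.card V * (2 * Real.logb 2 (Fintype.card V)) ^ 3 := by
      gcongr
      exact natLog_add_one_le_two_mul_logb hV
    _ = 16 * Fintype.card V * Real.logb 2 (Fintype.card V) ^ 3 := by ring

/-- Intersection graphs of grounded L-shapes admit biclique covers of size
`O(n (log₂ n)³)`. -/
theorem stmt_10 :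
    ∃ C : ℝ, 0 < C ∧ ∀ n : ℕ, 2 ≤ n →
      ∀ (a b h w : Fin n → ℝ), (∀ v, 0 ≤ h v) → (∀ v, 0 ≤ w v) →
      (∃ α β : ℝ, α < 0 ∧ ∀ v, b v = α * a v + β) →
      (Function.Injective fun v => (a v, b v)) →
      ∀ G : SimpleGraph (Fin n),
      (∀ u v, G.Adj u v ↔ u ≠ v ∧
        (LShape (a u) (b u) (h u) (w u) ∩ LShape (a v) (b v) (h v) (w v)).Nonempty) →
      ∃ (m : ℕ) (A B : Fin m → Finset (Fin n)),
        IsBicliqueCover G A B ∧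
        (coverSize A B : ℝ) ≤ C * (n : ℝ) * (Real.logb 2 n) ^ 3 := by
  refine ⟨16, by norm_num, fun n hn a b h w hh hw ⟨α, β, hα, hb⟩ hinj G hG => ?_⟩
  simpa using stmt_10_general (by simpa using hn) a b h w hh hw
    (antivary_of_eq_mul_add hα.le hb) hinj G hG
end

section
/- There exists a constant C > 0 such that for all n ≥ 2, the intersection graph G of any family of n nonempty closed intervals in ℝ admits a biclique cover of size at most C · n · log₂ n in which, moreover, every vertex of G belongs to A_i ∪ B_i for at most C · log₂ n indices i. -/
/-!
Rank the vertices by left endpoint. The neighbours `v` of `u` of larger rank are then those with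
`r u < r v < e u` for some bound `e u`. Halving `r u`, `r v` and `e u` until the middle number is
next to one of the outer two, say after `k` steps, places `r v` in a dyadic block of length `2 ^ k`
inside the gap between `r u` and `e u`, and next to the block of `r u` or that of `e u`. Take one
biclique for each dyadic block: on one side the vertices with rank in the block, on the other those
whose gap has the block as its first or last one of length `2 ^ k`. A vertex lies in at most three
bicliques for each `k`. Only `k < log₂ n` occur, as `e u ≤ n` has to stay at least `2` after `k`
halvings. The bound on the size follows by double counting.
-/

open scoped Finset

variable {V ι α β : Type*} {G : SimpleGraph V}

section Families

variable [DecidableEq V]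

/-- The number of members of a family of pairs of vertex sets which contain the vertex `v`, in
either of the two sets. -/
def bicliqueDegree [Fintype ι] (A B : ι → Finset V) (v : V) : ℕ :=
  #{i | v ∈ A i ∨ v ∈ B i}

lemma coverSize_eq_sum_bicliqueDegree [Fintype V] {m : ℕ} {A B : Fin m → Finset V}
    (hdisj : ∀ i, Disjoint (A i) (B i)) :
    coverSize A B = ∑ v, bicliqueDegree A B v := by
  calc coverSize A B = ∑ i, #{v | v ∈ A i ∨ v ∈ B i} :=
        Finset.sum_congr rfl fun i _ => by
          rw [← Finset.card_union_of_disjoint (hdisj i)]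
          congr 1
          ext v
          simp
    _ = ∑ v, bicliqueDegree A B v :=
        Finset.sum_card_bipartiteAbove_eq_sum_card_bipartiteBelow fun i v => v ∈ A i ∨ v ∈ B i

lemma exists_isBicliqueCover_of_fintype [Fintype ι] {A B : ι → Finset V}
    (hadj : ∀ i, ∀ a ∈ A i, ∀ b ∈ B i, G.Adj a b)
    (hcover : ∀ u v, G.Adj u v → ∃ i, (u ∈ A i ∧ v ∈ B i) ∨ (v ∈ A i ∧ u ∈ B i)) :
    ∃ (m : ℕ) (A' B' : Fin m → Finset V), IsBicliqueCover G A' B' ∧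
      ∀ v, bicliqueDegree A' B' v = bicliqueDegree A B v := by
  let σ := (Fintype.equivFin ι).symm
  refine ⟨Fintype.card ι, A ∘ σ, B ∘ σ, ⟨fun i => ?_, fun i => hadj (σ i), fun u v huv => ?_⟩,
    fun v => ?_⟩
  · exact Finset.disjoint_left.2 fun a ha hb => (hadj (σ i) a ha a hb).ne rfl
  · obtain ⟨i, hi⟩ := hcover u v huv
    exact ⟨σ.symm i, by simpa using hi⟩
  · exact Finset.card_equiv σ fun i => by simp

end Families

section Dyadic

lemma exists_div_two_pow_adjacent {s y t : ℕ} (hsy : s < y) (hyt : y < t) :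
    ∃ k, s / 2 ^ k < y / 2 ^ k ∧ y / 2 ^ k < t / 2 ^ k ∧
      (y / 2 ^ k = s / 2 ^ k + 1 ∨ y / 2 ^ k + 1 = t / 2 ^ k) := by
  induction t using Nat.strong_induction_on generalizing s y with
  | _ t ih =>
    by_cases hnear : y = s + 1 ∨ y + 1 = t
    · exact ⟨0, by simpa using ⟨hsy, hyt, hnear⟩⟩
    · obtain ⟨k, hk⟩ := ih (t / 2) (by omega) (s := s / 2) (y := y / 2) (by omega) (by omega)
      exact ⟨k + 1, by simpa only [pow_succ', ← Nat.div_div_eq_div_mul] using hk⟩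

variable [Fintype V]

/-- The vertices `u` for which the `j`-th dyadic block of length `2 ^ k`, that is
`[j * 2 ^ k, (j + 1) * 2 ^ k)`, lies strictly between the blocks of `r u` and `e u` and next to one
of them. This is the first side of the biclique of that block. -/
def blockSources (r e : V → ℕ) (k j : ℕ) : Finset V :=
  {u | r u / 2 ^ k < j ∧ j < e u / 2 ^ k ∧ (j = r u / 2 ^ k + 1 ∨ j + 1 = e u / 2 ^ k)}

/-- The vertices whose rank `r v` lies in the `j`-th dyadic block of length `2 ^ k`. This is the
second side of the biclique of that block. -/
def blockTargets (r : V → ℕ) (k j : ℕ) : Finset V :=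
  {v | r v / 2 ^ k = j}

variable {r e : V → ℕ} {k j : ℕ} {u v : V}

lemma lt_and_lt_of_mem_blockSources_of_mem_blockTargets (hu : u ∈ blockSources r e k j)
    (hv : v ∈ blockTargets r k j) : r u < r v ∧ r v < e u := by
  simp only [blockSources, blockTargets, Finset.mem_filter_univ] at hu hv
  subst hv
  exact ⟨lt_of_not_ge fun h => hu.1.not_ge (Nat.div_le_div_right h),
    lt_of_not_ge fun h => hu.2.1.not_ge (Nat.div_le_div_right h)⟩

lemma lt_log_of_mem_blockSources (hu : u ∈ blockSources r e k j) : k < Nat.log 2 (e u) := by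
  simp only [blockSources, Finset.mem_filter_univ] at hu
  have hj : 0 < j := Nat.zero_lt_of_lt hu.1
  have htwo : 2 ≤ e u / 2 ^ k := by omega
  refine Nat.le_log_of_pow_le one_lt_two ?_
  rw [pow_succ']
  exact (Nat.le_div_iff_mul_le (by positivity)).1 htwo

lemma exists_mem_blockSources_mem_blockTargets (huv : r u < r v) (hve : r v < e u) :
    ∃ k, u ∈ blockSources r e k (r v / 2 ^ k) ∧ v ∈ blockTargets r k (r v / 2 ^ k) := by
  simpa [blockSources, blockTargets] using exists_div_two_pow_adjacent huv hve

variable [DecidableEq V]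

lemma card_mem_blockSources_or_mem_blockTargets_le (r e : V → ℕ) (k N : ℕ) (v : V) :
    #{j : Fin N | v ∈ blockSources r e k j ∨ v ∈ blockTargets r k j} ≤ 3 := by
  let candidates : Finset ℕ := {r v / 2 ^ k + 1, e v / 2 ^ k - 1, r v / 2 ^ k}
  refine (Finset.card_le_card_of_injOn (t := candidates) Fin.val (fun j hj => ?_)
    Fin.val_injective.injOn).trans Finset.card_le_three
  simp only [blockSources, blockTargets, Finset.coe_filter_univ, Finset.mem_filter_univ,
    Set.mem_ofPred_eq] at hj
  simp only [candidates, Finset.mem_coe, Finset.mem_insert, Finset.mem_singleton]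
  omega

lemma bicliqueDegree_block_le (r e : V → ℕ) (L N : ℕ) (v : V) :
    bicliqueDegree (fun x : Fin L × Fin N => blockSources r e x.1 x.2)
      (fun x => blockTargets r x.1 x.2) v ≤ 3 * L := by
  calc _ = ∑ k : Fin L, #{j : Fin N | v ∈ blockSources r e k j ∨ v ∈ blockTargets r k j} := by
        simp only [bicliqueDegree, Finset.card_filter, Fintype.sum_prod_type]
    _ ≤ ∑ _k : Fin L, 3 :=
        Finset.sum_le_sum fun k _ => card_mem_blockSources_or_mem_blockTargets_le r e k N v
    _ = 3 * L := by simp [mul_comm]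

end Dyadic

lemma exists_isBicliqueCover_of_adj_iff_lt [Finite V] [DecidableEq V] {r e : V → ℕ} {N : ℕ}
    (hr : Function.Injective r) (hrN : ∀ v, r v < N) (heN : ∀ u, e u ≤ N)
    (hadj : ∀ u v, r u < r v → (G.Adj u v ↔ r v < e u)) :
    ∃ (m : ℕ) (A B : Fin m → Finset V), IsBicliqueCover G A B ∧
      ∀ v, bicliqueDegree A B v ≤ 3 * Nat.log 2 N := by
  have := Fintype.ofFinite V
  have hcover : ∀ u v, G.Adj u v → r u < r v → ∃ x : Fin (Nat.log 2 N) × Fin N,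
      u ∈ blockSources r e x.1 x.2 ∧ v ∈ blockTargets r x.1 x.2 := by
    intro u v huv hlt
    obtain ⟨k, hu, hv⟩ := exists_mem_blockSources_mem_blockTargets hlt ((hadj u v hlt).1 huv)
    have hk : k < Nat.log 2 N :=
      (lt_log_of_mem_blockSources hu).trans_le (Nat.log_mono_right (heN u))
    exact ⟨(⟨k, hk⟩, ⟨r v / 2 ^ k, (Nat.div_le_self _ _).trans_lt (hrN v)⟩), hu, hv⟩
  obtain ⟨m, A, B, hAB, hdeg⟩ := exists_isBicliqueCover_of_fintype (G := G)
    (A := fun x : Fin (Nat.log 2 N) × Fin N => blockSources r e x.1 x.2)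
    (B := fun x => blockTargets r x.1 x.2)
    (fun x a ha b hb => by
      have hab := lt_and_lt_of_mem_blockSources_of_mem_blockTargets ha hb
      exact (hadj a b hab.1).2 hab.2)
    (fun u v huv => by
      rcases (hr.ne huv.ne).lt_or_gt with hlt | hgt
      · exact (hcover u v huv hlt).imp fun _ => Or.inl
      · exact (hcover v u huv.symm hgt).imp fun _ => Or.inr)
  exact ⟨m, A, B, hAB, fun v => (hdeg v).trans_le (bicliqueDegree_block_le r e _ N v)⟩

section IntervalOrdering

/-- The ranking `r` is an interval ordering of `G`: a vertex `u` adjacent to a vertex of larger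
rank is adjacent to all vertices ranked in between. Finite interval graphs are exactly the finite
graphs with an injective ranking of this kind. -/
def IsIntervalOrdering [LT β] (G : SimpleGraph V) (r : V → β) : Prop :=
  ∀ u v w, r u < r v → r v < r w → G.Adj u w → G.Adj u v

lemma IsIntervalOrdering.exists_adj_iff_lt [Finite V] {r : V → ℕ} {N : ℕ}
    (h : IsIntervalOrdering G r) (hr : Function.Injective r) (hrN : ∀ v, r v < N) :
    ∃ e : V → ℕ, (∀ u, e u ≤ N) ∧ ∀ u v, r u < r v → (G.Adj u v ↔ r v < e u) := by
  classical
  have := Fintype.ofFinite V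
  refine ⟨fun u => (G.neighborFinset u).sup fun w => r w + 1,
    fun u => Finset.sup_le fun w _ => hrN w, fun u v huv => ?_⟩
  simp only [Finset.lt_sup_iff, SimpleGraph.mem_neighborFinset, Nat.lt_succ_iff]
  refine ⟨fun hadj => ⟨v, hadj, le_rfl⟩, fun ⟨w, hadj, hvw⟩ => ?_⟩
  rcases hvw.eq_or_lt with heq | hlt
  · rwa [hr heq]
  · exact h u v w huv hlt hadj

lemma isIntervalOrdering_of_Icc [Preorder α] [Preorder β] {lo hi : V → α} {r : V → β}
    (hlohi : ∀ v, lo v ≤ hi v)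
    (hG : ∀ u v, G.Adj u v ↔ u ≠ v ∧ (Set.Icc (lo u) (hi u) ∩ Set.Icc (lo v) (hi v)).Nonempty)
    (hr : ∀ u v, r u < r v → lo u ≤ lo v) : IsIntervalOrdering G r := by
  intro u v w huv hvw huw
  obtain ⟨-, x, hxu, hxw⟩ := (hG u w).1 huw
  have hv_mem : lo v ∈ Set.Icc (lo u) (hi u) :=
    ⟨hr u v huv, (hr v w hvw).trans (hxw.1.trans hxu.2)⟩
  exact (hG u v).2 ⟨ne_of_apply_ne r huv.ne, lo v, hv_mem, le_rfl, hlohi v⟩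

lemma exists_equiv_fin_symm_monotone [Fintype V] [LinearOrder α] (f : V → α) :
    ∃ σ : V ≃ Fin (Fintype.card V), Monotone (f ∘ σ.symm) :=
  let τ := Fintype.equivFin V
  ⟨τ.trans (Tuple.sort (f ∘ τ.symm)).symm, Tuple.monotone_sort (f ∘ τ.symm)⟩

lemma exists_isBicliqueCover_of_Icc [Fintype V] [DecidableEq V] [LinearOrder α]
    {lo hi : V → α} (hlohi : ∀ v, lo v ≤ hi v)
    (hG : ∀ u v, G.Adj u v ↔
      u ≠ v ∧ (Set.Icc (lo u) (hi u) ∩ Set.Icc (lo v) (hi v)).Nonempty) :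
    ∃ (m : ℕ) (A B : Fin m → Finset V), IsBicliqueCover G A B ∧
      ∀ v, bicliqueDegree A B v ≤ 3 * Nat.log 2 (Fintype.card V) := by
  obtain ⟨σ, hσ⟩ := exists_equiv_fin_symm_monotone lo
  let r : V → ℕ := fun v => σ v
  have hr : Function.Injective r := Fin.val_injective.comp σ.injective
  have hrN : ∀ v, r v < Fintype.card V := fun v => (σ v).isLt
  have hord : IsIntervalOrdering G r :=
    isIntervalOrdering_of_Icc hlohi hG fun u v huv => by simpa using hσ (Fin.lt_def.2 huv).le
  obtain ⟨e, heN, hadj⟩ := hord.exists_adj_iff_lt hr hrN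
  exact exists_isBicliqueCover_of_adj_iff_lt hr hrN heN hadj

end IntervalOrdering

theorem stmt_13_general [Fintype V] [DecidableEq V] [LinearOrder α] (lo hi : V → α)
    (hlohi : ∀ v, lo v ≤ hi v) (G : SimpleGraph V)
    (hG : ∀ u v, G.Adj u v ↔
      u ≠ v ∧ (Set.Icc (lo u) (hi u) ∩ Set.Icc (lo v) (hi v)).Nonempty) :
    ∃ (m : ℕ) (A B : Fin m → Finset V),
      IsBicliqueCover G A B ∧
      (coverSize A B : ℝ) ≤ 3 * (Fintype.card V : ℝ) * Real.logb 2 (Fintype.card V) ∧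
      ∀ v, (bicliqueDegree A B v : ℝ) ≤ 3 * Real.logb 2 (Fintype.card V) := by
  obtain ⟨m, A, B, hAB, hlog⟩ := exists_isBicliqueCover_of_Icc hlohi hG
  have hdeg : ∀ v, (bicliqueDegree A B v : ℝ) ≤ 3 * Real.logb 2 (Fintype.card V) := fun v =>
    calc (bicliqueDegree A B v : ℝ) ≤ 3 * Nat.log 2 (Fintype.card V) := mod_cast hlog v
      _ ≤ 3 * Real.logb 2 (Fintype.card V) := by
        gcongr
        exact Real.natLog_le_logb _ 2
  refine ⟨m, A, B, hAB, ?_, hdeg⟩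
  calc (coverSize A B : ℝ) = ∑ v, (bicliqueDegree A B v : ℝ) := by
        rw [coverSize_eq_sum_bicliqueDegree hAB.1, Nat.cast_sum]
    _ ≤ ∑ _v : V, 3 * Real.logb 2 (Fintype.card V) := Finset.sum_le_sum fun v _ => hdeg v
    _ = 3 * (Fintype.card V : ℝ) * Real.logb 2 (Fintype.card V) := by
        rw [Finset.sum_const, Finset.card_univ, nsmul_eq_mul]
        ring

/-- Interval graphs admit biclique covers of size `O(n log₂ n)` in which every
vertex appears in `O(log₂ n)` bicliques. -/
theorem stmt_13 :
    ∃ C : ℝ, 0 < C ∧ ∀ n : ℕ, 2 ≤ n →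
      ∀ (lo hi : Fin n → ℝ), (∀ v, lo v ≤ hi v) →
      ∀ G : SimpleGraph (Fin n),
      (∀ u v, G.Adj u v ↔ u ≠ v ∧
        (Set.Icc (lo u) (hi u) ∩ Set.Icc (lo v) (hi v)).Nonempty) →
      ∃ (m : ℕ) (A B : Fin m → Finset (Fin n)),
        IsBicliqueCover G A B ∧
        (coverSize A B : ℝ) ≤ C * (n : ℝ) * Real.logb 2 n ∧
        ∀ v : Fin n,
          (((Finset.univ : Finset (Fin m)).filter
              (fun i => v ∈ A i ∨ v ∈ B i)).card : ℝ) ≤ C * Real.logb 2 n := by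
  refine ⟨3, by norm_num, fun n _ lo hi hlohi G hG => ?_⟩
  simpa only [bicliqueDegree, Fintype.card_fin] using stmt_13_general lo hi hlohi G hG
end
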